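/- Let q = r^2 with r an odd prime power. Suppose q − 1 = e_1 f_1 = e_2 f_2, there exists an integer l ≥ 2 with e_1 ≡ 2^l (mod 2^{l+1}) and 2^l | e_2, and that 2e_2 | e_1(r+1) and e_1 | e_2(r−1). Let s, t be integers with 1 ≤ s ≤ D_1 and 1 ≤ t ≤ D_2, and set n_1 = s·f_1 + t·f_2. If both the integer t·e_1(r+1)/(2e_2) + (r+1)/2 and n_1 are even, then there exists an MDS self-dual code over F_q of length n_1, i.e., a linear code C ⊆ F_q^{n_1} with C = C⊥, dim C = n_1/2, and minimum Hamming distance n_1/2 + 1. -/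

import Mathlib

/-- The Euclidean dual of a linear code `C ⊆ F^n`. -/
def dualCode {F : Type*} [Field F] {n : ℕ} (C : Submodule F (Fin n → F)) :
    Submodule F (Fin n → F) where
  carrier := {x | ∀ c ∈ C, ∑ i, x i * c i = 0}
  add_mem' := by
    intro a b ha hb c hc
    simp only [Set.mem_setOf_eq] at ha hb ⊢
    simp [Pi.add_apply, add_mul, Finset.sum_add_distrib, ha c hc, hb c hc]
  zero_mem' := by intro c hc; simp
  smul_mem' := by
    intro r a ha c hc
    simp only [Set.mem_setOf_eq] at ha ⊢
    simp [Pi.smul_apply, smul_eq_mul, mul_assoc, ← Finset.mul_sum, ha c hc]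

/-- `C` has minimum Hamming distance `d`. -/
def IsMinDist {F : Type*} [Field F] [DecidableEq F] {n : ℕ}
    (C : Submodule F (Fin n → F)) (d : ℕ) : Prop :=
  (∀ c ∈ C, c ≠ 0 → d ≤ hammingNorm c) ∧ ∃ c ∈ C, c ≠ 0 ∧ hammingNorm c = d

/-!
A generalized Reed–Solomon code of length `n` and dimension `n / 2` on a set `S` of evaluation
points can be made self-dual by a choice of column multipliers as soon as the products
`∏ y ∈ S.erase x, (x - y)`, for `x ∈ S`, all have the same quadratic character.

Put `Dᵢ = eᵢ / gcd e₁ e₂`, so that `f₁ * D₁ = f₂ * D₂`, and let `S` be the union of the preimages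
of `s` of the `D₁`-th roots of `1` under `x ↦ x ^ f₁` and of `t` of the `D₂`-th roots of `-1` under
`x ↦ x ^ f₂`. The products then reduce to products of differences of these roots and of
`x ^ f₁`, `x ^ f₂`. Those arising from the `D₁`-th roots lie in the subfield with `r` elements,
where everything nonzero is a square in `F`. Those arising from the `D₂`-th roots are differences
of `(r + 1)`-st roots of unity `w` and `z`, whose character is governed by
`(w * z) ^ ((r + 1) / 2)`.
-/

open Polynomial

/-- An MDS self-dual code: equal to its Euclidean dual, hence of half dimension, with minimum
distance meeting the Singleton bound. Over `Fin n` with `n` odd there is none. -/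
def IsMDSSelfDual {F : Type*} [Field F] [DecidableEq F] {n : ℕ}
    (C : Submodule F (Fin n → F)) : Prop :=
  dualCode C = C ∧ Module.finrank F C = n / 2 ∧ IsMinDist C (n / 2 + 1)

section GeneralizedReedSolomon

variable {F : Type*} [Field F] {n k : ℕ} {a v : Fin n → F}

/-- The encoder of the generalized Reed–Solomon code with evaluation points `a` and column
multipliers `v`, on message polynomials of degree less than `k`. -/
noncomputable def grsEncode (k : ℕ) (a v : Fin n → F) : degreeLT F k →ₗ[F] (Fin n → F) where
  toFun f i := v i * (f : F[X]).eval (a i)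
  map_add' f g := by ext i; simp [mul_add]
  map_smul' c f := by ext i; simp [mul_left_comm]

/-- The generalized Reed–Solomon code `GRS_k(a, v)`. Distinctness of the points and
nonvanishing of the multipliers are imposed in the lemmas that need them. -/
noncomputable def grsCode (k : ℕ) (a v : Fin n → F) : Submodule F (Fin n → F) :=
  LinearMap.range (grsEncode k a v)

lemma grsEncode_apply (f : degreeLT F k) (i : Fin n) :
    grsEncode k a v f i = v i * (f : F[X]).eval (a i) := rfl

lemma lt_hammingNorm_grsEncode_add [DecidableEq F] (ha : Function.Injective a)
    (hv : ∀ i, v i ≠ 0) {f : degreeLT F k} (hf : f ≠ 0) :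
    n < hammingNorm (grsEncode k a v f) + k := by
  have hf0 : (f : F[X]) ≠ 0 := by simpa using hf
  have hdeg : (f : F[X]).natDegree < k :=
    (natDegree_lt_iff_degree_lt hf0).2 (mem_degreeLT.1 f.2)
  have hzeros : (Finset.univ.filter fun i ↦ grsEncode k a v f i = 0).card ≤
      (f : F[X]).natDegree := by
    rw [← Finset.card_image_of_injective _ ha]
    refine card_le_degree_of_subset_roots fun x hx ↦ ?_
    obtain ⟨i, hi, rfl⟩ := Finset.mem_image.1 (Finset.mem_def.2 hx)
    exact (mem_roots hf0).2 ((mul_eq_zero.1 (Finset.mem_filter.1 hi).2).resolve_left (hv i))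
  have hsplit : (Finset.univ.filter fun i ↦ grsEncode k a v f i = 0).card +
      hammingNorm (grsEncode k a v f) = n :=
    (Finset.card_filter_add_card_filter_not _).trans (Finset.card_fin n)
  omega

lemma grsEncode_injective (ha : Function.Injective a) (hv : ∀ i, v i ≠ 0) (hk : k ≤ n) :
    Function.Injective (grsEncode k a v) := by
  classical
  refine (injective_iff_map_eq_zero _).2 fun f hf ↦ ?_
  by_contra hf0
  have := lt_hammingNorm_grsEncode_add ha hv hf0
  rw [hf, hammingNorm_zero] at this
  omega

lemma finrank_grsCode (ha : Function.Injective a) (hv : ∀ i, v i ≠ 0) (hk : k ≤ n) :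
    Module.finrank F (grsCode k a v) = k := by
  rw [grsCode, LinearMap.finrank_range_of_inj (grsEncode_injective ha hv hk),
    (degreeLTEquiv F k).finrank_eq, Module.finrank_fin_fun]

lemma exists_hammingNorm_grsEncode_le [DecidableEq F] (a v : Fin n → F) (hk0 : 0 < k)
    (hk : k ≤ n) :
    ∃ f : degreeLT F k, f ≠ 0 ∧ hammingNorm (grsEncode k a v f) ≤ n - k + 1 := by
  obtain ⟨T, -, hT⟩ := Finset.exists_subset_card_eq (s := (Finset.univ : Finset (Fin n)))
    (n := k - 1) (by rw [Finset.card_univ, Fintype.card_fin]; omega)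
  have hdeg : Lagrange.nodal T a ∈ degreeLT F k := by
    rw [mem_degreeLT, Lagrange.degree_nodal, hT]
    exact_mod_cast Nat.sub_one_lt hk0.ne'
  refine ⟨⟨_, hdeg⟩, fun h ↦ Lagrange.nodal_ne_zero (congrArg Subtype.val h), ?_⟩
  have hsupp : (Finset.univ.filter fun i ↦ grsEncode k a v ⟨_, hdeg⟩ i ≠ 0) ⊆ Tᶜ := by
    intro i hi
    rw [Finset.mem_compl]
    intro hiT
    refine (Finset.mem_filter.1 hi).2 ?_
    rw [grsEncode_apply, Lagrange.eval_nodal_at_node hiT, mul_zero]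
  have hcard : hammingNorm (grsEncode k a v ⟨_, hdeg⟩) ≤ Tᶜ.card := Finset.card_le_card hsupp
  rw [Finset.card_compl, hT, Fintype.card_fin] at hcard
  omega

lemma isMinDist_grsCode [DecidableEq F] (ha : Function.Injective a) (hv : ∀ i, v i ≠ 0)
    (hk0 : 0 < k) (hk : k ≤ n) : IsMinDist (grsCode k a v) (n - k + 1) := by
  have hlower (f : degreeLT F k) (hf : f ≠ 0) :
      n - k + 1 ≤ hammingNorm (grsEncode k a v f) := by
    have := lt_hammingNorm_grsEncode_add ha hv hf
    omega
  refine ⟨?_, ?_⟩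
  · rintro _ ⟨f, rfl⟩ hc
    exact hlower f (by rintro rfl; exact hc (map_zero _))
  · obtain ⟨f, hf, hupper⟩ := exists_hammingNorm_grsEncode_le a v hk0 hk
    exact ⟨_, ⟨f, rfl⟩, (map_ne_zero_iff _ (grsEncode_injective ha hv hk)).2 hf,
      hupper.antisymm (hlower f hf)⟩

lemma degree_mul_lt_sub_one {f g : F[X]} (hf : f ∈ degreeLT F k) (hg : g ∈ degreeLT F k)
    (hk : 2 * k ≤ n) : (f * g).degree < (n - 1 : ℕ) := by
  rcases eq_or_ne f 0 with rfl | hf0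
  · simp
  rcases eq_or_ne g 0 with rfl | hg0
  · simp
  rw [mem_degreeLT, ← natDegree_lt_iff_degree_lt ‹_›] at hf hg
  rw [← natDegree_lt_iff_degree_lt (mul_ne_zero hf0 hg0), natDegree_mul hf0 hg0]
  omega

lemma grsCode_le_dualCode {c : F} (ha : Function.Injective a) (hk : 2 * k ≤ n)
    (h : ∀ i, v i ^ 2 * ∏ j ∈ Finset.univ.erase i, (a i - a j) = c) :
    grsCode k a v ≤ dualCode (grsCode k a v) := by
  rintro _ ⟨f, rfl⟩ _ ⟨g, rfl⟩
  have hdeg := degree_mul_lt_sub_one f.2 g.2 hk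
  have hΔ (i : Fin n) : ∏ j ∈ Finset.univ.erase i, (a i - a j) ≠ 0 :=
    Finset.prod_ne_zero_iff.2 fun j hj ↦
      sub_ne_zero.2 (ha.ne (Finset.ne_of_mem_erase hj).symm)
  have hlagrange := Lagrange.coeff_eq_sum (s := Finset.univ) ha.injOn
    (hdeg.trans_le (by simp))
  rw [Finset.card_univ, Fintype.card_fin, coeff_eq_zero_of_degree_lt hdeg] at hlagrange
  calc ∑ i, grsEncode k a v f i * grsEncode k a v g i
      = ∑ i, c * (((f : F[X]) * (g : F[X])).eval (a i) /
          ∏ j ∈ Finset.univ.erase i, (a i - a j)) := by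
        refine Finset.sum_congr rfl fun i _ ↦ ?_
        rw [grsEncode_apply, grsEncode_apply, eval_mul, ← h i]
        field_simp [hΔ i]
    _ = 0 := by rw [← Finset.mul_sum, ← hlagrange, mul_zero]

lemma finrank_dualCode (C : Submodule F (Fin n → F)) :
    Module.finrank F (dualCode C) = n - Module.finrank F C := by
  have horth : dualCode C =
      LinearMap.BilinForm.orthogonal (Matrix.toBilin' (1 : Matrix (Fin n) (Fin n) F)) C := by
    ext x
    rw [LinearMap.BilinForm.mem_orthogonal_iff]
    refine forall₂_congr fun c _ ↦ ?_
    rw [Matrix.toBilin'_apply']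
    simp [dotProduct, mul_comm]
  rw [horth, LinearMap.BilinForm.finrank_orthogonal, Module.finrank_fin_fun]
  exact (Matrix.nondegenerate_of_det_ne_zero (by simp)).toBilin'

theorem isMDSSelfDual_grsCode [DecidableEq F] {c : F} (ha : Function.Injective a)
    (hv : ∀ i, v i ≠ 0) (hk0 : 0 < k) (hn : n = 2 * k)
    (h : ∀ i, v i ^ 2 * ∏ j ∈ Finset.univ.erase i, (a i - a j) = c) :
    IsMDSSelfDual (grsCode k a v) := by
  have hfin := finrank_grsCode ha hv (show k ≤ n by omega)
  have hhalf : n / 2 = k := by omega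
  have hsub : n - k = k := by omega
  have hdist := isMinDist_grsCode ha hv hk0 (show k ≤ n by omega)
  rw [hsub] at hdist
  refine ⟨(Submodule.eq_of_le_of_finrank_eq (grsCode_le_dualCode ha (by omega) h) ?_).symm,
    by rw [hfin, hhalf], by rwa [hhalf]⟩
  rw [finrank_dualCode, hfin, hsub]

theorem exists_isMDSSelfDual_of_isSquare [DecidableEq F] {S : Finset F} {c : F}
    (hS : S.card = n) (hn0 : 0 < n) (hn : Even n) (hc : c ≠ 0)
    (h : ∀ x ∈ S, IsSquare (c * ∏ y ∈ S.erase x, (x - y))) :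
    ∃ C : Submodule F (Fin n → F), IsMDSSelfDual C := by
  have hmult : ∀ x ∈ S, ∃ w : F, w ≠ 0 ∧ w ^ 2 * ∏ y ∈ S.erase x, (x - y) = c := by
    intro x hx
    have hΔ : ∏ y ∈ S.erase x, (x - y) ≠ 0 :=
      Finset.prod_ne_zero_iff.2 fun y hy ↦ sub_ne_zero.2 (Finset.ne_of_mem_erase hy).symm
    obtain ⟨u, hu⟩ := h x hx
    have hu0 : u ≠ 0 := by
      rintro rfl
      exact mul_ne_zero hc hΔ (by rw [hu, mul_zero])
    refine ⟨u / ∏ y ∈ S.erase x, (x - y), div_ne_zero hu0 hΔ, ?_⟩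
    rw [div_pow, sq u, ← hu]
    field_simp
  choose! w hw0 hw using hmult
  let e : Fin n ≃ S := (S.equivFinOfCardEq hS).symm
  let a (i : Fin n) : F := e i
  have ha : Function.Injective a := Subtype.val_injective.comp e.injective
  obtain ⟨k, hk⟩ := hn
  refine ⟨_, isMDSSelfDual_grsCode (k := k) (c := c) (v := w ∘ a) ha (fun i ↦ hw0 _ (e i).2)
    (by omega) (by omega) fun i ↦ ?_⟩
  have himage : (Finset.univ.erase i).image a = S.erase (a i) := by
    have huniv : Finset.univ.image a = S := by
      ext y
      simpa [a] using ⟨fun ⟨j, hj⟩ ↦ hj ▸ (e j).2, fun hy ↦ ⟨e.symm ⟨y, hy⟩, by simp⟩⟩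
    rw [Finset.image_erase ha, huniv]
  rw [← hw _ (e i).2, ← himage, Finset.prod_image ha.injOn, Function.comp_apply]

end GeneralizedReedSolomon

theorem exists_isMDSSelfDual_of_quadraticChar_eq {F : Type*} [Field F] [Fintype F]
    [DecidableEq F] {n : ℕ} {S : Finset F} {ε : ℤ} (hS : S.card = n) (hn0 : 0 < n)
    (hn : Even n) (h : ∀ x ∈ S, quadraticChar F (∏ y ∈ S.erase x, (x - y)) = ε) :
    ∃ C : Submodule F (Fin n → F), IsMDSSelfDual C := by
  have hΔ (x : F) : ∏ y ∈ S.erase x, (x - y) ≠ 0 :=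
    Finset.prod_ne_zero_iff.2 fun y hy ↦ sub_ne_zero.2 (Finset.ne_of_mem_erase hy).symm
  obtain ⟨x₀, hx₀⟩ : S.Nonempty := Finset.card_pos.1 (by omega)
  refine exists_isMDSSelfDual_of_isSquare hS hn0 hn (hΔ x₀) fun x hx ↦ ?_
  rw [← quadraticChar_one_iff_isSquare (mul_ne_zero (hΔ x₀) (hΔ x)), map_mul, h x hx,
    ← h x₀ hx₀, ← sq, quadraticChar_sq_one (hΔ x₀)]

section PowPreimage

lemma nodal_dvd_X_pow_sub_one {F : Type*} [Field F] {e : ℕ} {P : Finset F} (he : e ≠ 0)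
    (hP : ∀ p ∈ P, p ^ e = 1) :
    Lagrange.nodal P id ∣ (X ^ e - 1 : F[X]) := by
  have hne : (X ^ e - 1 : F[X]) ≠ 0 := (monic_X_pow_sub_C 1 he).ne_zero
  refine (Multiset.prod_X_sub_C_dvd_iff_le_roots hne P.val).2 ?_
  refine (Multiset.le_iff_subset P.nodup).2 fun p hp ↦ (mem_roots hne).2 ?_
  simp [hP p hp]

variable {F : Type*} [Field F] [Fintype F] [DecidableEq F] {e f : ℕ} {P : Finset F}

/-- The preimage of `P` under `x ↦ x ^ f`. When `P` consists of nonzero `f`-th powers, it is a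
union of cosets of the group of `f`-th roots of unity. -/
def powPreimage (f : ℕ) (P : Finset F) : Finset F := {y | y ^ f ∈ P}

@[simp] lemma mem_powPreimage {x : F} : x ∈ powPreimage f P ↔ x ^ f ∈ P := by
  simp [powPreimage]

lemma nodal_roots_toFinset_of_dvd_X_pow_card_sub_X {g : F[X]} (hg : g.Monic)
    (hdvd : g ∣ X ^ Fintype.card F - X) : Lagrange.nodal g.roots.toFinset id = g := by
  have hne := FiniteField.X_pow_card_sub_X_ne_zero F (Fintype.one_lt_card (α := F))
  have hsplits : (X ^ Fintype.card F - X : F[X]).Splits := by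
    rw [splits_iff_card_roots, FiniteField.roots_X_pow_card_sub_X,
      FiniteField.X_pow_card_sub_X_natDegree_eq F Fintype.one_lt_card]
    rfl
  have hnodup : g.roots.Nodup := Multiset.nodup_of_le (roots.le_of_dvd hne hdvd)
    (by rw [FiniteField.roots_X_pow_card_sub_X]; exact Finset.univ.nodup)
  rw [Lagrange.nodal_eq, Finset.prod_eq_multiset_prod, Multiset.toFinset_val, hnodup.dedup]
  exact ((hsplits.of_dvd hne hdvd).eq_prod_roots_of_monic hg).symm

lemma nodal_powPreimage (hef : e * f ∣ Fintype.card F - 1) (hP : ∀ p ∈ P, p ^ e = 1) :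
    Lagrange.nodal (powPreimage f P) id = (Lagrange.nodal P id).comp (X ^ f) := by
  have hq : 1 < Fintype.card F := Fintype.one_lt_card
  obtain ⟨he, hf⟩ : e ≠ 0 ∧ f ≠ 0 :=
    mul_ne_zero_iff.1 (ne_zero_of_dvd_ne_zero (Nat.sub_ne_zero_of_lt hq) hef)
  have hmonic : ((Lagrange.nodal P id).comp (X ^ f)).Monic :=
    Lagrange.nodal_monic.comp (monic_X_pow f) (by rwa [natDegree_X_pow])
  have hdvd : (Lagrange.nodal P id).comp (X ^ f) ∣ (X ^ Fintype.card F - X : F[X]) := by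
    have hcomp : (X ^ e - 1 : F[X]).comp (X ^ f) ∣ X ^ (Fintype.card F - 1) - 1 := by
      obtain ⟨m, hm⟩ := hef
      rw [hm, mul_comm e f, pow_mul, pow_mul]
      simpa using sub_dvd_pow_sub_pow ((X ^ f) ^ e : F[X]) 1 m
    have hfactor : (X ^ Fintype.card F - X : F[X]) = (X ^ (Fintype.card F - 1) - 1) * X := by
      rw [sub_mul, ← pow_succ, Nat.sub_add_cancel hq.le, one_mul]
    have hnodal := map_dvd (compRingHom (X ^ f)) (nodal_dvd_X_pow_sub_one he hP)
    rw [hfactor]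
    exact (hnodal.trans hcomp).mul_right X
  rw [← nodal_roots_toFinset_of_dvd_X_pow_card_sub_X hmonic hdvd]
  congr 1
  ext x
  simp [hmonic.ne_zero, eval_comp, Lagrange.eval_nodal, Finset.prod_eq_zero_iff, sub_eq_zero]

lemma card_powPreimage (hef : e * f ∣ Fintype.card F - 1) (hP : ∀ p ∈ P, p ^ e = 1) :
    (powPreimage f P).card = P.card * f := by
  simpa [natDegree_comp] using congrArg natDegree (nodal_powPreimage hef hP)

lemma prod_powPreimage_sub (hef : e * f ∣ Fintype.card F - 1) (hP : ∀ p ∈ P, p ^ e = 1)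
    (x : F) : ∏ y ∈ powPreimage f P, (x - y) = ∏ p ∈ P, (x ^ f - p) := by
  simpa [eval_comp, Lagrange.eval_nodal] using congrArg (eval x) (nodal_powPreimage hef hP)

lemma prod_erase_powPreimage_sub (hef : e * f ∣ Fintype.card F - 1) (hP : ∀ p ∈ P, p ^ e = 1)
    {x : F} (hx : x ∈ powPreimage f P) :
    ∏ y ∈ (powPreimage f P).erase x, (x - y) =
      f * x ^ (f - 1) * ∏ p ∈ P.erase (x ^ f), (x ^ f - p) := by
  have hderiv (S : Finset F) {y : F} (hy : y ∈ S) :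
      (derivative (Lagrange.nodal S id)).eval y = ∏ z ∈ S.erase y, (y - z) := by
    simpa [Lagrange.eval_nodal] using Lagrange.eval_nodal_derivative_eval_node_eq (v := id) hy
  rw [← hderiv _ hx, nodal_powPreimage hef hP, derivative_comp, eval_mul, eval_comp, eval_pow,
    eval_X, hderiv _ (mem_powPreimage.1 hx)]
  simp [derivative_X_pow]

end PowPreimage

lemma exists_card_eq_forall_pow_eq {F : Type*} [Field F] [Fintype F] {e f s : ℕ} {c : F}
    (hef : e * f ∣ Fintype.card F - 1) (hc : c ^ e = 1) (hs : s ≤ f) :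
    ∃ P : Finset F, P.card = s ∧ ∀ p ∈ P, p ^ f = c := by
  classical
  have hcard : (powPreimage f {c}).card = f := by
    rw [card_powPreimage hef (by simpa using hc), Finset.card_singleton, one_mul]
  obtain ⟨P, hsub, hP⟩ := Finset.exists_subset_card_eq (hs.trans_eq hcard.symm)
  exact ⟨P, hP, fun p hp ↦ by simpa using hsub hp⟩

lemma sq_sub_one_eq_mul (r : ℕ) : r ^ 2 - 1 = (r + 1) * (r - 1) := by
  simpa using Nat.sq_sub_sq r 1

section QuadraticCharacter

variable {F : Type*} [Field F] [Fintype F] {r : ℕ}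

lemma exists_ringHom_eq_pow_of_dvd_card (hr : r ∣ Fintype.card F) :
    ∃ φ : F →+* F, ∀ x, φ x = x ^ r := by
  obtain ⟨p, _, n, hp, hcard⟩ := FiniteField.card' F
  obtain ⟨k, -, rfl⟩ := (Nat.dvd_prime_pow hp).1 (hcard ▸ hr)
  have : Fact p.Prime := ⟨hp⟩
  exact ⟨iterateFrobenius F p k, iterateFrobenius_def p k⟩

lemma ringChar_ne_two_of_two_dvd_card_sub_one (h : 2 ∣ Fintype.card F - 1) :
    ringChar F ≠ 2 := by
  have : 1 < Fintype.card F := Fintype.one_lt_card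
  rw [Ne, FiniteField.even_card_iff_char_two]
  omega

/-- On `(r + 1)`-st roots of unity Frobenius is inversion, so `(w - z) ^ r = w⁻¹ - z⁻¹`. -/
lemma sub_pow_sub_one_mul_mul {w z : F} (hr : r ∣ Fintype.card F) (hw : w ^ (r + 1) = 1)
    (hz : z ^ (r + 1) = 1) (hwz : w ≠ z) : (w - z) ^ (r - 1) * (w * z) = -1 := by
  obtain ⟨φ, hφ⟩ := exists_ringHom_eq_pow_of_dvd_card hr
  have hr1 : r - 1 + 1 = r :=
    Nat.sub_add_cancel (Nat.pos_of_dvd_of_pos hr Fintype.card_pos)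
  have hfrob : (w - z) ^ r = w ^ r - z ^ r := by simp only [← hφ, map_sub]
  refine mul_right_cancel₀ (sub_ne_zero.2 hwz) ?_
  calc (w - z) ^ (r - 1) * (w * z) * (w - z)
      = (w - z) ^ (r - 1 + 1) * (w * z) := by ring
    _ = w ^ (r + 1) * z - z ^ (r + 1) * w := by rw [hr1, hfrob]; ring
    _ = -1 * (w - z) := by rw [hw, hz]; ring

variable [DecidableEq F]

lemma quadraticChar_eq_neg_one_pow {x : F} {k : ℕ} (hF : ringChar F ≠ 2)
    (hx : x ^ (Fintype.card F / 2) = (-1) ^ k) : quadraticChar F x = (-1) ^ k := by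
  have hx0 : x ≠ 0 := by
    rintro rfl
    rw [zero_pow (Nat.div_pos Fintype.one_lt_card two_pos).ne'] at hx
    exact pow_ne_zero k (neg_ne_zero.2 one_ne_zero) hx.symm
  refine Int.cast_injOn_of_ringChar_ne_two hF ?_ ?_ ?_
  · rcases quadraticChar_dichotomy hx0 with h | h <;> simp [h]
  · rcases neg_one_pow_eq_or ℤ k with h | h <;> simp [h]
  · rw [quadraticChar_eq_pow_of_char_ne_two' hF, hx]
    simp

lemma quadraticChar_eq_one_of_pow_eq_one {x : F} {k : ℕ} (hk : 2 * k ∣ Fintype.card F - 1)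
    (hx : x ^ k = 1) : quadraticChar F x = 1 := by
  obtain ⟨m, hm⟩ := hk
  have hhalf : Fintype.card F / 2 = k * m := by
    rw [mul_assoc] at hm
    have : 1 < Fintype.card F := Fintype.one_lt_card
    omega
  refine quadraticChar_eq_neg_one_pow (k := 0)
    (ringChar_ne_two_of_two_dvd_card_sub_one ⟨k * m, by rw [hm, mul_assoc]⟩) ?_
  rw [hhalf, pow_mul, hx, one_pow, pow_zero]

lemma quadraticChar_eq_one_of_pow_eq_self (hF : Fintype.card F = r ^ 2) (hr : Odd r) {x : F}
    (hx0 : x ≠ 0) (hx : x ^ r = x) : quadraticChar F x = 1 := by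
  have hpow : x ^ (r - 1) = 1 :=
    mul_right_cancel₀ hx0 (by rw [← pow_succ, Nat.sub_add_cancel hr.pos, hx, one_mul])
  refine quadraticChar_eq_one_of_pow_eq_one ?_ hpow
  rw [hF, sq_sub_one_eq_mul]
  exact mul_dvd_mul_right (even_iff_two_dvd.1 (hr.add_odd odd_one)) _

lemma quadraticChar_natCast_eq_one {m : ℕ} (hF : Fintype.card F = r ^ 2) (hr : Odd r)
    (hm : m ∣ Fintype.card F - 1) : quadraticChar F (m : F) = 1 := by
  have hdvd : r ∣ Fintype.card F := hF ▸ dvd_pow_self r two_ne_zero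
  obtain ⟨φ, hφ⟩ := exists_ringHom_eq_pow_of_dvd_card hdvd
  refine quadraticChar_eq_one_of_pow_eq_self hF hr ?_ (by rw [← hφ, map_natCast])
  have hcast : ((Fintype.card F - 1 : ℕ) : F) = -1 := by
    rw [Nat.cast_sub Fintype.card_pos, FiniteField.cast_card_eq_zero, Nat.cast_one, zero_sub]
  exact fun h0 ↦ neg_ne_zero.2 one_ne_zero
    (hcast.symm.trans (zero_dvd_iff.1 (h0 ▸ Nat.cast_dvd_cast hm)))

lemma quadraticChar_sub_eq_one {w p : F} (hF : Fintype.card F = r ^ 2) (hr : Odd r)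
    (hw : w ^ r = w) (hp : p ^ r = p) (hwp : w ≠ p) : quadraticChar F (w - p) = 1 := by
  have hdvd : r ∣ Fintype.card F := hF ▸ dvd_pow_self r two_ne_zero
  obtain ⟨φ, hφ⟩ := exists_ringHom_eq_pow_of_dvd_card hdvd
  refine quadraticChar_eq_one_of_pow_eq_self hF hr (sub_ne_zero.2 hwp) ?_
  rw [← hφ, map_sub, hφ, hφ, hw, hp]

lemma quadraticChar_sub_eq_neg_one_pow {w z : F} {N m : ℕ} (hF : Fintype.card F = r ^ 2)
    (hN : r + 1 = 2 * N) (hw : w ^ (r + 1) = 1) (hz : z ^ (r + 1) = 1) (hwz : w ≠ z)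
    (hm : (w * z) ^ N = (-1) ^ m) : quadraticChar F (w - z) = (-1) ^ (N + m) := by
  have hq : Fintype.card F - 1 = 2 * ((r - 1) * N) := by
    rw [hF, sq_sub_one_eq_mul, hN, mul_assoc, mul_comm N]
  have hhalf : Fintype.card F / 2 = (r - 1) * N := by
    have : 1 < Fintype.card F := Fintype.one_lt_card
    omega
  refine quadraticChar_eq_neg_one_pow
    (ringChar_ne_two_of_two_dvd_card_sub_one ⟨_, hq⟩) ?_
  have hpow := sub_pow_sub_one_mul_mul (hF ▸ dvd_pow_self r two_ne_zero) hw hz hwz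
  have hsign : ((-1 : F) ^ m) * (-1) ^ m = 1 := by rw [← mul_pow]; simp
  calc (w - z) ^ (Fintype.card F / 2)
      = ((w - z) ^ (r - 1) * (w * z)) ^ N * (-1) ^ m := by
        rw [mul_pow, hm, mul_assoc, hsign, mul_one, hhalf, pow_mul]
    _ = (-1) ^ (N + m) := by rw [hpow, pow_add]

lemma quadraticChar_prod_sub_eq_one {w : F} {P : Finset F} (hF : Fintype.card F = r ^ 2)
    (hr : Odd r) (hw : w ^ r = w) (hP : ∀ p ∈ P, p ^ r = p) (hwP : w ∉ P) :
    quadraticChar F (∏ p ∈ P, (w - p)) = 1 := by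
  rw [map_prod]
  exact Finset.prod_eq_one fun p hp ↦
    quadraticChar_sub_eq_one hF hr hw (hP p hp) (ne_of_mem_of_not_mem hp hwP).symm

lemma quadraticChar_prod_sub_eq_neg_one_pow {w : F} {Q : Finset F} {N m : ℕ}
    (hF : Fintype.card F = r ^ 2) (hN : r + 1 = 2 * N) (hw : w ^ (r + 1) = 1)
    (hQ : ∀ z ∈ Q, z ^ (r + 1) = 1) (hwQ : w ∉ Q) (hm : ∀ z ∈ Q, (w * z) ^ N = (-1) ^ m) :
    quadraticChar F (∏ z ∈ Q, (w - z)) = (-1) ^ ((N + m) * Q.card) := by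
  rw [map_prod, pow_mul]
  exact Finset.prod_eq_pow_card fun z hz ↦ quadraticChar_sub_eq_neg_one_pow hF hN hw (hQ z hz)
    (ne_of_mem_of_not_mem hz hwQ).symm (hm z hz)

lemma quadraticChar_prod_erase_powPreimage {e f : ℕ} {P : Finset F} {x : F}
    (hF : Fintype.card F = r ^ 2) (hr : Odd r) (hef : 2 * (e * f) ∣ Fintype.card F - 1)
    (hP : ∀ p ∈ P, p ^ e = 1) (hx : x ∈ powPreimage f P) :
    quadraticChar F (∏ y ∈ (powPreimage f P).erase x, (x - y)) =
      quadraticChar F (∏ p ∈ P.erase (x ^ f), (x ^ f - p)) := by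
  have hef' : e * f ∣ Fintype.card F - 1 := dvd_of_mul_left_dvd hef
  have hχx : quadraticChar F x = 1 := by
    refine quadraticChar_eq_one_of_pow_eq_one hef ?_
    rw [mul_comm, pow_mul, hP _ (mem_powPreimage.1 hx)]
  rw [prod_erase_powPreimage_sub hef' hP hx, map_mul, map_mul, map_pow, hχx, one_pow,
    quadraticChar_natCast_eq_one hF hr (dvd_of_mul_left_dvd hef'), one_mul, one_mul]

end QuadraticCharacter

lemma prod_erase_union {α M : Type*} [DecidableEq α] [CommMonoid M] {A B : Finset α} {x : α}
    (g : α → M) (h : Disjoint A B) (hx : x ∈ A) :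
    ∏ y ∈ (A ∪ B).erase x, g y = (∏ y ∈ A.erase x, g y) * ∏ y ∈ B, g y := by
  rw [Finset.erase_union_distrib, Finset.erase_eq_of_notMem (Finset.disjoint_left.1 h hx),
    Finset.prod_union (Finset.disjoint_of_subset_left (Finset.erase_subset _ _) h)]

lemma pow_eq_self_of_pow_eq_one {M : Type*} [Monoid M] {x : M} {k r : ℕ} (hr : 0 < r)
    (hk : k ∣ r - 1) (hx : x ^ k = 1) : x ^ r = x := by
  obtain ⟨c, hc⟩ := hk
  rw [← Nat.sub_add_cancel hr, pow_succ, hc, pow_mul, hx, one_pow, one_mul]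

lemma pow_two_mul_eq_one {M : Type*} [Monoid M] [HasDistribNeg M] {x : M} {k : ℕ}
    (hx : x ^ k = -1) : x ^ (2 * k) = 1 := by
  rw [mul_comm, pow_mul, hx, neg_one_sq]

lemma even_mul_sub_one_iff {N m t : ℕ} (ht : 0 < t) (h : Even (t * m + N)) :
    Even (N * (t - 1)) ↔ Even ((N + m) * t) := by
  simp only [Nat.even_add, Nat.even_mul, Nat.even_sub' ht] at h ⊢
  grind

section EvaluationSet

variable {F : Type*} [Field F] [Fintype F] [DecidableEq F]
  {r f₁ f₂ D₁ D₂ m : ℕ} {P Q : Finset F}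

lemma disjoint_powPreimage (hF : ringChar F ≠ 2) (hL : f₁ * D₁ = f₂ * D₂)
    (hP : ∀ p ∈ P, p ^ D₁ = 1) (hQ : ∀ z ∈ Q, z ^ D₂ = -1) :
    Disjoint (powPreimage f₁ P) (powPreimage f₂ Q) := by
  refine Finset.disjoint_left.2 fun x hxP hxQ ↦ Ring.neg_one_ne_one_of_char_ne_two hF ?_
  rw [← hQ _ (mem_powPreimage.1 hxQ), ← hP _ (mem_powPreimage.1 hxP), ← pow_mul, ← pow_mul, hL]

lemma quadraticChar_prod_erase_union_of_mem_left {x : F} (hF : Fintype.card F = r ^ 2)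
    (hL : f₁ * D₁ = f₂ * D₂) (hLF : 4 * (f₁ * D₁) ∣ Fintype.card F - 1) (hD₁ : D₁ ∣ r - 1)
    (hm : r + 1 = 2 * (D₂ * m)) (hP : ∀ p ∈ P, p ^ D₁ = 1) (hQ : ∀ z ∈ Q, z ^ D₂ = -1)
    (hx : x ∈ powPreimage f₁ P) :
    quadraticChar F (∏ y ∈ (powPreimage f₁ P ∪ powPreimage f₂ Q).erase x, (x - y)) =
      (-1) ^ ((D₂ * m + m) * Q.card) := by
  have hr : Odd r := ⟨D₂ * m - 1, by omega⟩
  have hchar := ringChar_ne_two_of_two_dvd_card_sub_one (F := F)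
    (dvd_trans ⟨2 * (f₁ * D₁), by ring⟩ hLF)
  have hx₁ : x ^ f₁ ∈ P := mem_powPreimage.1 hx
  have hx₂ : (x ^ f₂) ^ D₂ = 1 := by rw [← pow_mul, ← hL, pow_mul, hP _ hx₁]
  have hfix (p : F) (hp : p ∈ P) : p ^ r = p := pow_eq_self_of_pow_eq_one hr.pos hD₁ (hP p hp)
  have hsame : quadraticChar F (∏ y ∈ (powPreimage f₁ P).erase x, (x - y)) = 1 := by
    rw [quadraticChar_prod_erase_powPreimage hF hr (dvd_trans ⟨2, by ring⟩ hLF) hP hx]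
    exact quadraticChar_prod_sub_eq_one hF hr (hfix _ hx₁)
      (fun p hp ↦ hfix p (Finset.mem_of_mem_erase hp)) (Finset.notMem_erase _ _)
  have hother : quadraticChar F (∏ y ∈ powPreimage f₂ Q, (x - y)) =
      (-1) ^ ((D₂ * m + m) * Q.card) := by
    rw [prod_powPreimage_sub (e := 2 * D₂) (dvd_trans ⟨2, by rw [hL]; ring⟩ hLF)
      fun z hz ↦ pow_two_mul_eq_one (hQ z hz)]
    have hroot (z : F) (hz : z ^ (2 * D₂) = 1) : z ^ (r + 1) = 1 := by
      rw [hm, ← mul_assoc, pow_mul, hz, one_pow]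
    refine quadraticChar_prod_sub_eq_neg_one_pow hF hm ?_
      (fun z hz ↦ hroot z (pow_two_mul_eq_one (hQ z hz))) (fun h ↦ ?_) fun z hz ↦ ?_
    · exact hroot _ (by rw [mul_comm, pow_mul, hx₂, one_pow])
    · exact Ring.neg_one_ne_one_of_char_ne_two hchar ((hQ _ h).symm.trans hx₂)
    · rw [pow_mul, mul_pow, hx₂, hQ z hz, one_mul]
  rw [prod_erase_union _ (disjoint_powPreimage hchar hL hP hQ) hx, map_mul, hsame, hother,
    one_mul]

lemma quadraticChar_prod_erase_union_of_mem_right {x : F} (hF : Fintype.card F = r ^ 2)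
    (hL : f₁ * D₁ = f₂ * D₂) (hLF : 4 * (f₁ * D₁) ∣ Fintype.card F - 1)
    (hD₁ : 2 * D₁ ∣ r - 1) (hm : r + 1 = 2 * (D₂ * m)) (hP : ∀ p ∈ P, p ^ D₁ = 1)
    (hQ : ∀ z ∈ Q, z ^ D₂ = -1) (hx : x ∈ powPreimage f₂ Q) :
    quadraticChar F (∏ y ∈ (powPreimage f₁ P ∪ powPreimage f₂ Q).erase x, (x - y)) =
      (-1) ^ (D₂ * m * (Q.card - 1)) := by
  have hr : Odd r := ⟨D₂ * m - 1, by omega⟩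
  have hchar := ringChar_ne_two_of_two_dvd_card_sub_one (F := F)
    (dvd_trans ⟨2 * (f₁ * D₁), by ring⟩ hLF)
  have hx₂ : x ^ f₂ ∈ Q := mem_powPreimage.1 hx
  have hx₁ : (x ^ f₁) ^ D₁ = -1 := by rw [← pow_mul, hL, pow_mul, hQ _ hx₂]
  have hQ' (z : F) (hz : z ∈ Q) : z ^ (2 * D₂) = 1 := pow_two_mul_eq_one (hQ z hz)
  have hroot (z : F) (hz : z ∈ Q) : z ^ (r + 1) = 1 := by
    rw [hm, ← mul_assoc, pow_mul, hQ' z hz, one_pow]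
  have hsame : quadraticChar F (∏ y ∈ (powPreimage f₂ Q).erase x, (x - y)) =
      (-1) ^ (D₂ * m * (Q.card - 1)) := by
    rw [quadraticChar_prod_erase_powPreimage (e := 2 * D₂) hF hr
      (dvd_trans ⟨1, by rw [hL]; ring⟩ hLF) hQ' hx, ← Finset.card_erase_of_mem hx₂]
    refine quadraticChar_prod_sub_eq_neg_one_pow (N := D₂ * m) (m := 0) hF hm
      (hroot _ hx₂) (fun z hz ↦ hroot z (Finset.mem_of_mem_erase hz)) (Finset.notMem_erase _ _)
      fun z hz ↦ ?_
    rw [pow_mul, mul_pow, hQ _ hx₂, hQ z (Finset.mem_of_mem_erase hz)]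
    simp
  have hother : quadraticChar F (∏ y ∈ powPreimage f₁ P, (x - y)) = 1 := by
    rw [prod_powPreimage_sub (dvd_trans ⟨4, by ring⟩ hLF) hP]
    refine quadraticChar_prod_sub_eq_one hF hr
      (pow_eq_self_of_pow_eq_one hr.pos hD₁ (pow_two_mul_eq_one hx₁))
      (fun p hp ↦ pow_eq_self_of_pow_eq_one hr.pos (dvd_of_mul_left_dvd hD₁) (hP p hp))
      fun h ↦ Ring.neg_one_ne_one_of_char_ne_two hchar (hx₁.symm.trans (hP _ h))
  rw [Finset.union_comm, prod_erase_union _ (disjoint_powPreimage hchar hL hP hQ).symm hx,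
    map_mul, hsame, hother, mul_one]

lemma card_powPreimage_union (hL : f₁ * D₁ = f₂ * D₂)
    (hLF : 4 * (f₁ * D₁) ∣ Fintype.card F - 1) (hP : ∀ p ∈ P, p ^ D₁ = 1)
    (hQ : ∀ z ∈ Q, z ^ D₂ = -1) :
    (powPreimage f₁ P ∪ powPreimage f₂ Q).card = P.card * f₁ + Q.card * f₂ := by
  have hchar := ringChar_ne_two_of_two_dvd_card_sub_one (F := F)
    (dvd_trans ⟨2 * (f₁ * D₁), by ring⟩ hLF)
  rw [Finset.card_union_of_disjoint (disjoint_powPreimage hchar hL hP hQ),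
    card_powPreimage (dvd_trans ⟨4, by ring⟩ hLF) hP,
    card_powPreimage (e := 2 * D₂) (dvd_trans ⟨2, by rw [hL]; ring⟩ hLF)
      fun z hz ↦ pow_two_mul_eq_one (hQ z hz)]

theorem exists_isMDSSelfDual_of_powPreimage_union (hF : Fintype.card F = r ^ 2)
    (hL : f₁ * D₁ = f₂ * D₂) (hLF : 4 * (f₁ * D₁) ∣ Fintype.card F - 1)
    (hD₁ : 2 * D₁ ∣ r - 1) (hm : r + 1 = 2 * (D₂ * m)) (hP : ∀ p ∈ P, p ^ D₁ = 1)
    (hQ : ∀ z ∈ Q, z ^ D₂ = -1) (hpar : Even (Q.card * m + D₂ * m))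
    (hpos : 0 < P.card * f₁ + Q.card * f₂) (hn : Even (P.card * f₁ + Q.card * f₂)) :
    ∃ C : Submodule F (Fin (P.card * f₁ + Q.card * f₂) → F), IsMDSSelfDual C := by
  refine exists_isMDSSelfDual_of_quadraticChar_eq (card_powPreimage_union hL hLF hP hQ) hpos hn
    (ε := (-1) ^ ((D₂ * m + m) * Q.card)) fun x hx ↦ ?_
  rcases Finset.mem_union.1 hx with hxP | hxQ
  · exact quadraticChar_prod_erase_union_of_mem_left hF hL hLF (dvd_of_mul_left_dvd hD₁) hm
      hP hQ hxP
  · have hQ0 : 0 < Q.card := Finset.card_pos.2 ⟨_, mem_powPreimage.1 hxQ⟩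
    rw [quadraticChar_prod_erase_union_of_mem_right hF hL hLF hD₁ hm hP hQ hxQ]
    exact neg_one_pow_congr (even_mul_sub_one_iff hQ0 hpar)

end EvaluationSet

theorem mds_self_dual_thm3_even_length_general {F : Type*} [Field F] [Fintype F]
    [DecidableEq F] {r f₁ f₂ D₁ D₂ s t : ℕ} (hF : Fintype.card F = r ^ 2)
    (hL : f₁ * D₁ = f₂ * D₂) (hLr : 4 * (f₁ * D₁) ∣ r ^ 2 - 1) (hD₁ : 2 * D₁ ∣ r - 1)
    (hD₂ : 2 * D₂ ∣ r + 1) (hs : s ≤ D₁) (ht : t ≤ D₂) (hpos : 0 < s * f₁ + t * f₂)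
    (hpar : Even (t * ((r + 1) / (2 * D₂)) + (r + 1) / 2)) (hn : Even (s * f₁ + t * f₂)) :
    ∃ C : Submodule F (Fin (s * f₁ + t * f₂) → F), IsMDSSelfDual C := by
  have hD₂_pos : 0 < 2 * D₂ := Nat.pos_of_dvd_of_pos hD₂ r.succ_pos
  obtain ⟨m, hm⟩ := hD₂
  rw [hm, Nat.mul_div_cancel_left _ hD₂_pos, mul_assoc, Nat.mul_div_cancel_left _ two_pos] at hpar
  rw [mul_assoc] at hm
  rw [← hF] at hLr
  obtain ⟨P, rfl, hP⟩ := exists_card_eq_forall_pow_eq (F := F) (c := 1)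
    (dvd_of_mul_left_dvd hLr) (one_pow _) hs
  obtain ⟨Q, rfl, hQ⟩ := exists_card_eq_forall_pow_eq (F := F) (e := 2 * f₂) (c := -1)
    (dvd_trans ⟨2, by rw [hL]; ring⟩ hLr) (by simp [pow_mul]) ht
  exact exists_isMDSSelfDual_of_powPreimage_union hF hL hLr hD₁ hm hP hQ hpar hpos hn

section Divisibility

variable {a b c l q t : ℕ}

lemma two_pow_dvd_of_mod_eq (ha : a % 2 ^ (l + 1) = 2 ^ l) : 2 ^ l ∣ a :=
  (Nat.dvd_mod_iff (pow_dvd_pow 2 l.le_succ)).1 (ha ▸ dvd_rfl)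

lemma four_dvd_gcd (hl : 2 ≤ l) (ha : a % 2 ^ (l + 1) = 2 ^ l) (hb : 2 ^ l ∣ b) :
    4 ∣ Nat.gcd a b :=
  (pow_dvd_pow 2 hl).trans (Nat.dvd_gcd (two_pow_dvd_of_mod_eq ha) hb)

lemma odd_div_gcd (ha : a % 2 ^ (l + 1) = 2 ^ l) (hb : 2 ^ l ∣ b) : Odd (a / Nat.gcd a b) := by
  rw [← Nat.not_even_iff_odd]
  rintro ⟨d, hd⟩
  have hdvd : 2 ^ (l + 1) ∣ a := by
    rw [← Nat.mul_div_cancel' (Nat.gcd_dvd_left a b), hd, ← two_mul, pow_succ]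
    exact mul_dvd_mul (Nat.dvd_gcd (two_pow_dvd_of_mod_eq ha) hb) (dvd_mul_right 2 d)
  rw [Nat.mod_eq_zero_of_dvd hdvd] at ha
  exact (pow_pos two_pos l).ne ha

lemma div_gcd_dvd_of_dvd_mul (ha : 0 < a) (h : a ∣ b * c) : a / Nat.gcd a b ∣ c :=
  (Nat.div_dvd_iff_dvd_mul (Nat.gcd_dvd_left a b) (Nat.gcd_pos_of_pos_left b ha)).2
    (dvd_gcd_mul_of_dvd_mul h)

lemma two_mul_div_gcd_left_dvd (ha : 0 < a) (hodd : Odd (a / Nat.gcd a b)) (hc : Even c)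
    (h : a ∣ b * c) : 2 * (a / Nat.gcd a b) ∣ c :=
  hodd.coprime_two_left.mul_dvd_of_dvd_of_dvd hc.two_dvd (div_gcd_dvd_of_dvd_mul ha h)

lemma two_mul_div_gcd_right_dvd (hb : 0 < b) (hc : Even c) (h : 2 * b ∣ a * c) :
    2 * (b / Nat.gcd a b) ∣ c := by
  obtain ⟨k, rfl⟩ := hc.two_dvd
  rw [mul_left_comm] at h
  rw [Nat.gcd_comm]
  exact mul_dvd_mul_left 2 (div_gcd_dvd_of_dvd_mul hb (Nat.dvd_of_mul_dvd_mul_left two_pos h))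

lemma mul_mul_div_two_mul (hb : 0 < b) (hc : 2 * (b / Nat.gcd a b) ∣ c) :
    t * a * c / (2 * b) = a / Nat.gcd a b * (t * (c / (2 * (b / Nat.gcd a b)))) := by
  have ha' := Nat.mul_div_cancel' (Nat.gcd_dvd_left a b)
  have hb' := Nat.mul_div_cancel' (Nat.gcd_dvd_right a b)
  refine Nat.div_eq_of_eq_mul_left (by omega) ?_
  calc t * a * c
      = t * (Nat.gcd a b * (a / Nat.gcd a b)) *
          (2 * (b / Nat.gcd a b) * (c / (2 * (b / Nat.gcd a b)))) := by
        rw [ha', Nat.mul_div_cancel' hc]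
    _ = a / Nat.gcd a b * (t * (c / (2 * (b / Nat.gcd a b)))) *
          (2 * (Nat.gcd a b * (b / Nat.gcd a b))) := by ring
    _ = _ := by rw [hb']

lemma even_mul_div_add (hb : 0 < b) (hodd : Odd (a / Nat.gcd a b))
    (hc : 2 * (b / Nat.gcd a b) ∣ c) (h : Even (t * a * c / (2 * b) + q)) :
    Even (t * (c / (2 * (b / Nat.gcd a b))) + q) := by
  rw [mul_mul_div_two_mul hb hc] at h
  simpa [Nat.even_add, Nat.even_mul, Nat.not_even_iff_odd.2 hodd] using h

lemma mul_div_gcd_left_eq_right {d : ℕ} (h : a * c = b * d) :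
    c * (a / Nat.gcd a b) = d * (b / Nat.gcd a b) := by
  rw [← Nat.mul_div_assoc _ (Nat.gcd_dvd_left a b), ← Nat.mul_div_assoc _ (Nat.gcd_dvd_right a b),
    mul_comm, h, mul_comm]

lemma mul_mul_div_gcd_dvd {k : ℕ} (hk : k ∣ Nat.gcd a b) : k * (c * (a / Nat.gcd a b)) ∣ a * c := by
  refine (mul_dvd_mul_right hk _).trans (dvd_of_eq ?_)
  rw [mul_left_comm, Nat.mul_div_cancel' (Nat.gcd_dvd_left a b), mul_comm]

end Divisibility

/-- Theorem 3.3(1): if `(r+1)/2·(t·e₁/e₂ + 1)` and `n₁ = s·f₁ + t·f₂` are even, there is a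
`q`-ary MDS self-dual code of length `n₁`, where `q = r²`. -/
theorem mds_self_dual_thm3_even_length
    (r e1 f1 e2 f2 s t l : ℕ)
    (hr_odd : Odd r) (hr_pp : IsPrimePow r)
    (hq1 : r ^ 2 - 1 = e1 * f1) (hq2 : r ^ 2 - 1 = e2 * f2)
    (hl : 2 ≤ l) (he1 : e1 % 2 ^ (l + 1) = 2 ^ l) (he2 : 2 ^ l ∣ e2)
    (hdvd1 : 2 * e2 ∣ e1 * (r + 1)) (hdvd2 : e1 ∣ e2 * (r - 1))
    (hs1 : 1 ≤ s) (hs2 : s ≤ e1 / Nat.gcd e1 e2)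
    (ht1 : 1 ≤ t) (ht2 : t ≤ e2 / Nat.gcd e1 e2)
    (heven : Even (t * e1 * (r + 1) / (2 * e2) + (r + 1) / 2))
    (hn1 : Even (s * f1 + t * f2))
    (F : Type*) [Field F] [Fintype F] [DecidableEq F]
    (hF : Fintype.card F = r ^ 2) :
    ∃ C : Submodule F (Fin (s * f1 + t * f2) → F),
      dualCode C = C ∧
      Module.finrank F C = (s * f1 + t * f2) / 2 ∧
      IsMinDist C ((s * f1 + t * f2) / 2 + 1) := by
  have hq : 0 < r ^ 2 - 1 := Nat.sub_pos_of_lt (hF ▸ Fintype.one_lt_card)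
  have he1_pos : 0 < e1 := Nat.pos_of_mul_pos_right (hq1 ▸ hq)
  have he2_pos : 0 < e2 := Nat.pos_of_mul_pos_right (hq2 ▸ hq)
  have hf1_pos : 0 < f1 := Nat.pos_of_mul_pos_left (hq1 ▸ hq)
  have hodd : Odd (e1 / Nat.gcd e1 e2) := odd_div_gcd he1 he2
  have hD₂ := two_mul_div_gcd_right_dvd he2_pos hr_odd.add_one hdvd1
  exact mds_self_dual_thm3_even_length_general hF
    (mul_div_gcd_left_eq_right (hq1.symm.trans hq2))
    (hq1 ▸ mul_mul_div_gcd_dvd (four_dvd_gcd hl he1 he2))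
    (two_mul_div_gcd_left_dvd he1_pos hodd (hr_odd.tsub_odd odd_one) hdvd2) hD₂ hs2 ht2
    (Nat.add_pos_left (Nat.mul_pos hs1 hf1_pos) _)
    (even_mul_div_add he2_pos hodd hD₂ heven) hn1
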